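/- Let Γ̂_pos = Γ_pr − Σ_{i=1}^{r} (δᵢ²/(1+δᵢ²)) ŵᵢ ŵᵢᵀ be the optimal approximation of Γ_pos in 𝓜_r. Then the matrix Â* = Γ̂_pos Gᵀ Γ_obs⁻¹ minimizes the Bayes risk E[ ‖A y − x‖²_{Γ_pos⁻¹} ] over the class 𝓐̂_r = { (Γ_pr − B) Gᵀ Γ_obs⁻¹ : B a real n×n matrix with rank(B) ≤ r }, where the expectation is over the joint law of (x, y). -/

import Mathlib

open Matrix MeasureTheory Finset

/-- The density (w.r.t. Lebesgue measure on `ℝⁿ`) of the Gaussian measure `N(μ, Σ)`. -/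
noncomputable def gaussianDensity {n : ℕ} (μ : Fin n → ℝ) (S : Matrix (Fin n) (Fin n) ℝ)
    (x : Fin n → ℝ) : ℝ :=
  (2 * Real.pi) ^ (-(n : ℝ) / 2) * S.det ^ (-(1:ℝ) / 2) *
    Real.exp (-(1 / 2) * ((x - μ) ⬝ᵥ (S⁻¹ *ᵥ (x - μ))))

/-- The Gaussian probability measure `N(μ, Σ)` on `ℝⁿ`. -/
noncomputable def gaussianMeasure {n : ℕ} (μ : Fin n → ℝ)
    (S : Matrix (Fin n) (Fin n) ℝ) : Measure (Fin n → ℝ) :=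
  MeasureTheory.volume.withDensity fun x => ENNReal.ofReal (gaussianDensity μ S x)

/-- The joint law of `(x, y)` where `x ~ N(0, Γpr)`, `ε ~ N(0, Γobs)` independent of `x`,
and `y = G x + ε`. -/
noncomputable def jointMeasure {n m : ℕ} (G : Matrix (Fin m) (Fin n) ℝ)
    (Γpr : Matrix (Fin n) (Fin n) ℝ) (Γobs : Matrix (Fin m) (Fin m) ℝ) :
    Measure ((Fin n → ℝ) × (Fin m → ℝ)) :=
  Measure.map (fun p : (Fin n → ℝ) × (Fin m → ℝ) => (p.1, G *ᵥ p.1 + p.2))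
    ((gaussianMeasure 0 Γpr).prod (gaussianMeasure 0 Γobs))

/-- The Bayes risk `E[ ‖A y − x‖²_S ]` of the linear estimator `y ↦ A y`. -/
noncomputable def bayesRisk {n m : ℕ} (P : Measure ((Fin n → ℝ) × (Fin m → ℝ)))
    (S : Matrix (Fin n) (Fin n) ℝ) (A : Matrix (Fin n) (Fin m) ℝ) : ℝ :=
  ∫ p, (A *ᵥ p.2 - p.1) ⬝ᵥ (S *ᵥ (A *ᵥ p.2 - p.1)) ∂P

/-!
For an estimator `A = X Gᵀ Γobs⁻¹`, completing the square in `X` writes the error covariance as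
`Γpos + (X - Γpos) (H Γpr H + H) (X - Γpos)ᵀ`, so up to the additive constant `n` the Bayes risk is
a squared Frobenius distance of `X` to `Γpos`, weighted by `Γpos⁻¹` and `H Γpr H + H`. In the basis
of generalized eigenvectors both weights are diagonal, with entries `1 + δ²` and `δ² (1 + δ²)`, and
the matrix `Γpr - Γpos` to be approximated by `B` is diagonal with entries `δ² / (1 + δ²)`. Once
the weights are absorbed its squared entries become `δ⁶`, which are decreasing, so by the
Eckart–Young theorem keeping the leading `r` of them is optimal.
-/

section EckartYoung

/-- The sequence `s` with all entries of index at least `r` set to zero. -/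
def truncate {n : ℕ} (r : ℕ) (s : Fin n → ℝ) (i : Fin n) : ℝ :=
  if (i : ℕ) < r then s i else 0

theorem sum_truncate_smul {M : Type*} [AddCommMonoid M] [Module ℝ M] {n : ℕ} (r : ℕ)
    (s : Fin n → ℝ) (v : Fin n → M) :
    ∑ i, truncate r s i • v i = ∑ i ∈ {i : Fin n | (i : ℕ) < r}, s i • v i := by
  simp only [truncate, ite_smul, zero_smul, sum_filter]

theorem rank_diagonal_truncate_le {n : ℕ} (r : ℕ) (s : Fin n → ℝ) :
    (diagonal (truncate r s)).rank ≤ r := by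
  calc (diagonal (truncate r s)).rank
      = #{i | truncate r s i ≠ 0} := by rw [rank_diagonal, Fintype.card_subtype]
    _ ≤ #{i : Fin n | (i : ℕ) < r} := card_le_card (by intro i; simp +contextual [truncate])
    _ ≤ r := by rw [Fin.card_filter_val_lt]; exact min_le_right _ _

theorem sum_tail_le_sum_mul_one_sub {n r : ℕ} {s p : Fin n → ℝ} (hs : Antitone s)
    (hs₀ : ∀ i, 0 ≤ s i) (hp₀ : ∀ i, 0 ≤ p i) (hp₁ : ∀ i, p i ≤ 1) (hp : ∑ i, p i ≤ r) :
    ∑ i ∈ {i : Fin n | r ≤ (i : ℕ)}, s i ≤ ∑ i, s i * (1 - p i) := by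
  rw [sum_filter]
  obtain hnr | hrn := le_or_gt n r
  · refine sum_le_sum fun i _ => ?_
    rw [if_neg (i.isLt.trans_le hnr).not_ge]
    exact mul_nonneg (hs₀ i) (sub_nonneg.2 (hp₁ i))
  -- The threshold `t = s r` is the Lagrange multiplier of the constraint `∑ i, p i ≤ r`.
  set t := s ⟨r, hrn⟩
  have hterm (i : Fin n) : (if r ≤ (i : ℕ) then s i else 0) ≤
      s i * (1 - p i) - t * ((if (i : ℕ) < r then 1 else 0) - p i) := by
    obtain hi | hi := le_or_gt r (i : ℕ)
    · have hit : s i ≤ t := hs (Fin.mk_le_of_le_val hi)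
      rw [if_pos hi, if_neg hi.not_gt]
      nlinarith [hp₀ i]
    · have hti : t ≤ s i := hs (Fin.le_def.2 hi.le)
      rw [if_neg hi.not_ge, if_pos hi]
      nlinarith [hp₁ i]
  have hcard : ∑ i : Fin n, (if (i : ℕ) < r then (1 : ℝ) else 0) = r := by
    rw [sum_boole, Fin.card_filter_val_lt, min_eq_right hrn.le]
  calc ∑ i : Fin n, (if r ≤ (i : ℕ) then s i else 0)
      ≤ ∑ i, (s i * (1 - p i) - t * ((if (i : ℕ) < r then 1 else 0) - p i)) :=
        sum_le_sum fun i _ => hterm i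
    _ = ∑ i, s i * (1 - p i) - t * (r - ∑ i, p i) := by
        rw [sum_sub_distrib, ← mul_sum, sum_sub_distrib, hcard]
    _ ≤ ∑ i, s i * (1 - p i) :=
        sub_le_self _ (mul_nonneg (hs₀ _) (sub_nonneg.2 hp))

theorem sum_norm_sq_starProjection_le_finrank {𝕜 E ι : Type*} [RCLike 𝕜] [NormedAddCommGroup E]
    [InnerProductSpace 𝕜 E] [Fintype ι] {b : ι → E} (hb : Orthonormal 𝕜 b)
    (U : Submodule 𝕜 E) [FiniteDimensional 𝕜 U] :
    ∑ j, ‖U.starProjection (b j)‖ ^ 2 ≤ Module.finrank 𝕜 U := by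
  let u := stdOrthonormalBasis 𝕜 U
  have hproj (j : ι) : ‖U.starProjection (b j)‖ ^ 2 = ∑ k, ‖inner 𝕜 (b j) (u k : E)‖ ^ 2 := by
    rw [Submodule.starProjection_apply, ← Submodule.coe_norm, ← u.sum_sq_norm_inner_right]
    refine sum_congr rfl fun k _ => ?_
    rw [Submodule.inner_orthogonalProjectionOnto_eq_of_mem_left, norm_inner_symm]
  calc ∑ j, ‖U.starProjection (b j)‖ ^ 2
      = ∑ k, ∑ j, ‖inner 𝕜 (b j) (u k : E)‖ ^ 2 := by simp_rw [hproj]; exact sum_comm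
    _ ≤ ∑ k, ‖(u k : E)‖ ^ 2 := sum_le_sum fun k _ => hb.sum_inner_products_le _
    _ = Module.finrank 𝕜 U := by simp [← Submodule.coe_norm]

theorem norm_sub_starProjection_le {𝕜 E : Type*} [RCLike 𝕜] [NormedAddCommGroup E]
    [InnerProductSpace 𝕜 E] (U : Submodule 𝕜 E) [U.HasOrthogonalProjection] (x : E) {v : E}
    (hv : v ∈ U) : ‖x - U.starProjection x‖ ≤ ‖x - v‖ := by
  rw [U.starProjection_minimal]
  exact ciInf_le ⟨0, Set.forall_mem_range.2 fun _ => norm_nonneg _⟩ (⟨v, hv⟩ : U)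

theorem sum_sq_tail_le_sum_norm_sq_smul_sub {E : Type*} [NormedAddCommGroup E]
    [InnerProductSpace ℝ E] {n r : ℕ} {b v : Fin n → E} (hb : Orthonormal ℝ b)
    {s : Fin n → ℝ} (hs : Antitone fun i => s i ^ 2) {U : Submodule ℝ E} [FiniteDimensional ℝ U]
    (hU : Module.finrank ℝ U ≤ r) (hv : ∀ j, v j ∈ U) :
    ∑ i ∈ {i : Fin n | r ≤ (i : ℕ)}, s i ^ 2 ≤ ∑ j, ‖s j • b j - v j‖ ^ 2 := by
  have hpythagoras (j : Fin n) :
      ‖b j - U.starProjection (b j)‖ ^ 2 = 1 - ‖U.starProjection (b j)‖ ^ 2 := by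
    have h := U.norm_sq_eq_add_norm_sq_starProjection (b j)
    rw [hb.1 j, Submodule.starProjection_orthogonal_val] at h
    linarith
  have hcol (j : Fin n) :
      s j ^ 2 * (1 - ‖U.starProjection (b j)‖ ^ 2) ≤ ‖s j • b j - v j‖ ^ 2 := by
    have h := norm_sub_starProjection_le U (s j • b j) (hv j)
    rw [map_smul, ← smul_sub] at h
    calc s j ^ 2 * (1 - ‖U.starProjection (b j)‖ ^ 2)
        = ‖s j • (b j - U.starProjection (b j))‖ ^ 2 := by
          rw [norm_smul, mul_pow, Real.norm_eq_abs, sq_abs, hpythagoras]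
      _ ≤ ‖s j • b j - v j‖ ^ 2 := pow_le_pow_left₀ (norm_nonneg _) h 2
  refine (sum_tail_le_sum_mul_one_sub hs (fun _ => sq_nonneg _) (fun _ => sq_nonneg _)
    (fun j => ?_) ((sum_norm_sq_starProjection_le_finrank hb U).trans (mod_cast hU))).trans
    (sum_le_sum fun j _ => hcol j)
  exact sub_nonneg.1 (hpythagoras j ▸ sq_nonneg _)

theorem sum_sq_tail_le_sum_sq_diagonal_sub {n r : ℕ} {s : Fin n → ℝ}
    (hs : Antitone fun i => s i ^ 2) {C : Matrix (Fin n) (Fin n) ℝ} (hC : C.rank ≤ r) :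
    ∑ i ∈ {i : Fin n | r ≤ (i : ℕ)}, s i ^ 2 ≤ ∑ i, ∑ j, (diagonal s i j - C i j) ^ 2 := by
  let b := EuclideanSpace.basisFun (Fin n) ℝ
  have hrange : Module.finrank ℝ (LinearMap.range (toEuclideanLin C)) ≤ r := by
    rwa [toEuclideanLin_eq_toLin_orthonormal, ← rank_eq_finrank_range_toLin]
  refine (sum_sq_tail_le_sum_norm_sq_smul_sub b.orthonormal hs hrange
    fun j => LinearMap.mem_range_self _ (b j)).trans_eq ?_
  rw [sum_comm]
  refine sum_congr rfl fun j _ => ?_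
  rw [EuclideanSpace.real_norm_sq_eq]
  refine sum_congr rfl fun i _ => ?_
  by_cases hij : i = j <;> simp [b, hij]

/-- The squared Frobenius norm of `F` weighted by `a` on rows and by `b` on columns. -/
def weightedSqNorm {ι κ : Type*} [Fintype ι] [Fintype κ] (a : ι → ℝ) (b : κ → ℝ)
    (F : Matrix ι κ ℝ) : ℝ :=
  ∑ i, ∑ j, a i * b j * F i j ^ 2

theorem weightedSqNorm_diagonal {ι : Type*} [Fintype ι] [DecidableEq ι] (a b s : ι → ℝ) :
    weightedSqNorm a b (diagonal s) = ∑ i, a i * b i * s i ^ 2 := by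
  refine sum_congr rfl fun i _ => ?_
  rw [sum_eq_single i (fun j _ hj => ?_) (by simp), diagonal_apply_eq]
  rw [diagonal_apply_ne _ hj.symm, zero_pow two_ne_zero, mul_zero]

theorem trace_diagonal_mul_mul_diagonal_mul_transpose {ι κ : Type*} [Fintype ι] [Fintype κ]
    [DecidableEq ι] [DecidableEq κ] (a : ι → ℝ) (b : κ → ℝ) (F : Matrix ι κ ℝ) :
    trace (diagonal a * (F * diagonal b * Fᵀ)) = weightedSqNorm a b F := by
  refine sum_congr rfl fun i _ => ?_
  rw [diag_apply, diagonal_mul, mul_apply, mul_sum]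
  refine sum_congr rfl fun j _ => ?_
  rw [mul_diagonal, transpose_apply]
  ring

theorem weightedSqNorm_diagonal_sub_truncate_le {n r : ℕ} {a b s : Fin n → ℝ}
    (ha : ∀ i, 0 ≤ a i) (hb : ∀ i, 0 ≤ b i) (hs : Antitone fun i => a i * b i * s i ^ 2)
    {C : Matrix (Fin n) (Fin n) ℝ} (hC : C.rank ≤ r) :
    weightedSqNorm a b (diagonal s - diagonal (truncate r s)) ≤
      weightedSqNorm a b (diagonal s - C) := by
  have hsq (i : Fin n) : (√(a i) * s i * √(b i)) ^ 2 = a i * b i * s i ^ 2 := by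
    rw [mul_pow, mul_pow, Real.sq_sqrt (ha i), Real.sq_sqrt (hb i)]
    ring
  have hrank : (diagonal (fun i => √(a i)) * C * diagonal (fun j => √(b j))).rank ≤ r :=
    (rank_mul_le_left _ _).trans ((rank_mul_le_right _ _).trans hC)
  calc weightedSqNorm a b (diagonal s - diagonal (truncate r s))
      = ∑ i ∈ {i : Fin n | r ≤ (i : ℕ)}, a i * b i * s i ^ 2 := by
        rw [diagonal_sub, weightedSqNorm_diagonal, sum_filter]
        refine sum_congr rfl fun i _ => ?_
        obtain hi | hi := le_or_gt r (i : ℕ)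
        · simp [truncate, hi, hi.not_gt]
        · simp [truncate, hi, hi.not_ge]
    _ = ∑ i ∈ {i : Fin n | r ≤ (i : ℕ)}, (√(a i) * s i * √(b i)) ^ 2 := by simp_rw [hsq]
    _ ≤ ∑ i, ∑ j, (diagonal (fun i => √(a i) * s i * √(b i)) i j -
          (diagonal (fun i => √(a i)) * C * diagonal (fun j => √(b j))) i j) ^ 2 :=
        sum_sq_tail_le_sum_sq_diagonal_sub (s := fun i => √(a i) * s i * √(b i))
          (by simpa only [hsq] using hs) hrank
    _ = weightedSqNorm a b (diagonal s - C) := by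
        refine sum_congr rfl fun i _ => sum_congr rfl fun j _ => ?_
        have hentry : diagonal (fun i => √(a i) * s i * √(b i)) i j =
            √(a i) * diagonal s i j * √(b j) := by
          by_cases hij : i = j <;> simp [hij]
        rw [hentry, mul_diagonal, diagonal_mul, Matrix.sub_apply, ← sub_mul, ← mul_sub, mul_pow,
          mul_pow, Real.sq_sqrt (ha i), Real.sq_sqrt (hb j)]
        ring

end EckartYoung

section SecondMoments

open ProbabilityTheory

variable {Ω ι κ : Type*} [MeasurableSpace Ω] {P : Measure Ω} {X Y : Ω → ι → ℝ}
  {S T : Matrix ι ι ℝ}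

/-- The square-integrable random vector `X` has mean zero and covariance matrix `S` under `P`. -/
structure IsCenteredWithCov (X : Ω → ι → ℝ) (S : Matrix ι ι ℝ) (P : Measure Ω) : Prop where
  memLp (i : ι) : MemLp (fun ω => X ω i) 2 P
  integral_eq_zero (i : ι) : ∫ ω, X ω i ∂P = 0
  covariance_eq (i j : ι) : cov[fun ω => X ω i, fun ω => X ω j; P] = S i j

namespace IsCenteredWithCov

theorem comp_measurePreserving {Ω' : Type*} [MeasurableSpace Ω'] {Q : Measure Ω'} {f : Ω' → Ω}
    (hX : IsCenteredWithCov X S P) (hf : MeasurePreserving f Q P) :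
    IsCenteredWithCov (fun ω => X (f ω)) S Q where
  memLp i := (hX.memLp i).comp_measurePreserving hf
  integral_eq_zero i := by
    have hi := (hX.memLp i).aestronglyMeasurable
    have h := hX.integral_eq_zero i
    rw [← hf.map_eq] at hi h
    rwa [integral_map hf.aemeasurable hi] at h
  covariance_eq i j := by
    have hi := (hX.memLp i).aestronglyMeasurable
    have hj := (hX.memLp j).aestronglyMeasurable
    have h := hX.covariance_eq i j
    rw [← hf.map_eq] at hi hj h
    rwa [covariance_map_fun hi hj hf.aemeasurable] at h

theorem mulVec [Fintype ι] [IsFiniteMeasure P] (hX : IsCenteredWithCov X S P)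
    (M : Matrix κ ι ℝ) : IsCenteredWithCov (fun ω => M *ᵥ X ω) (M * S * Mᵀ) P where
  memLp k := memLp_finsetSum _ fun i _ => (hX.memLp i).const_mul (M k i)
  integral_eq_zero k := by
    simp only [Matrix.mulVec, dotProduct]
    rw [integral_finsetSum _ fun i _ =>
      ((hX.memLp i).integrable one_le_two).const_mul (M k i)]
    simp [integral_const_mul, hX.integral_eq_zero]
  covariance_eq k l := by
    simp only [Matrix.mulVec, dotProduct]
    rw [covariance_fun_sum_fun_sum (fun i => (hX.memLp i).const_mul (M k i))
      (fun j => (hX.memLp j).const_mul (M l j))]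
    simp only [covariance_const_mul_left, covariance_const_mul_right, hX.covariance_eq,
      mul_apply, sum_mul, transpose_apply]
    rw [sum_comm]
    exact sum_congr rfl fun j _ => sum_congr rfl fun i _ => by ring

theorem add_of_indepFun [IsFiniteMeasure P] (hX : IsCenteredWithCov X S P)
    (hY : IsCenteredWithCov Y T P) (hXY : IndepFun X Y P) :
    IsCenteredWithCov (fun ω => X ω + Y ω) (S + T) P where
  memLp i := (hX.memLp i).add (hY.memLp i)
  integral_eq_zero i := by
    simp only [Pi.add_apply]
    rw [integral_add ((hX.memLp i).integrable one_le_two) ((hY.memLp i).integrable one_le_two),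
      hX.integral_eq_zero, hY.integral_eq_zero, add_zero]
  covariance_eq i j := by
    have hcross (i j : ι) : cov[fun ω => X ω i, fun ω => Y ω j; P] = 0 :=
      (hXY.comp (measurable_pi_apply i) (measurable_pi_apply j)).covariance_eq_zero
        (hX.memLp i) (hY.memLp j)
    change cov[(fun ω => X ω i) + fun ω => Y ω i, (fun ω => X ω j) + fun ω => Y ω j; P] =
      S i j + T i j
    rw [covariance_add_left (hX.memLp i) (hY.memLp i) ((hX.memLp j).add (hY.memLp j)),
      covariance_add_right (hX.memLp i) (hX.memLp j) (hY.memLp j),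
      covariance_add_right (hY.memLp i) (hX.memLp j) (hY.memLp j), hX.covariance_eq,
      hY.covariance_eq, hcross, covariance_comm, hcross, add_zero, zero_add]

theorem integral_dotProduct_mulVec [Fintype ι] [IsProbabilityMeasure P]
    (hX : IsCenteredWithCov X S P) (M : Matrix ι ι ℝ) :
    ∫ ω, X ω ⬝ᵥ (M *ᵥ X ω) ∂P = trace (M * S) := by
  have hint (i j : ι) : Integrable (fun ω => M i j * (X ω i * X ω j)) P :=
    ((hX.memLp i).integrable_mul (hX.memLp j)).const_mul _
  have hmom (i j : ι) : ∫ ω, X ω i * X ω j ∂P = S j i := by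
    have h := covariance_eq_sub (hX.memLp i) (hX.memLp j)
    rw [covariance_comm, hX.covariance_eq, hX.integral_eq_zero, zero_mul, sub_zero] at h
    exact h.symm
  calc ∫ ω, X ω ⬝ᵥ (M *ᵥ X ω) ∂P = ∫ ω, ∑ i, ∑ j, M i j * (X ω i * X ω j) ∂P := by
        simp only [dotProduct, Matrix.mulVec, mul_sum, mul_left_comm]
    _ = ∑ i, ∑ j, M i j * S j i := by
        rw [integral_finsetSum _ fun i _ => integrable_finsetSum _ fun j _ => hint i j]
        simp only [integral_finsetSum _ fun j _ => hint _ j, integral_const_mul, hmom]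
    _ = trace (M * S) := by simp only [trace, diag_apply, mul_apply]

end IsCenteredWithCov

end SecondMoments

section Gaussian

open ProbabilityTheory WithLp
open scoped MatrixOrder Matrix.Norms.L2Operator

theorem map_withDensity_comp {α β : Type*} [MeasurableSpace α] [MeasurableSpace β]
    (ν : Measure α) {f : α → β} (hf : Measurable f) {g : β → ENNReal} (hg : Measurable g) :
    (ν.withDensity (g ∘ f)).map f = (ν.map f).withDensity g := by
  ext s hs
  rw [Measure.map_apply hf hs, withDensity_apply _ (hf hs), withDensity_apply _ hs,
    setLIntegral_map hs hg hf]
  rfl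

theorem pi_withDensity_ofReal {ι : Type*} [Fintype ι] {α : ι → Type*}
    [∀ i, MeasurableSpace (α i)] (ν : ∀ i, Measure (α i)) [∀ i, SigmaFinite (ν i)]
    {f : ∀ i, α i → ℝ} (hf₀ : ∀ i x, 0 ≤ f i x) (hf : ∀ i, Integrable (f i) (ν i)) :
    Measure.pi (fun i => (ν i).withDensity fun x => ENNReal.ofReal (f i x)) =
      (Measure.pi ν).withDensity fun x => ENNReal.ofReal (∏ i, f i (x i)) := by
  have (i : ι) : IsFiniteMeasure ((ν i).withDensity fun x => ENNReal.ofReal (f i x)) :=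
    isFiniteMeasure_withDensity_ofReal (hf i).2
  refine Measure.pi_eq fun s hs => ?_
  have hint : Integrable (fun x => ∏ i, f i (x i)) (Measure.pi fun i => (ν i).restrict (s i)) :=
    Integrable.fintype_prod_dep fun i => (hf i).restrict
  rw [withDensity_apply _ (MeasurableSet.univ_pi hs), Measure.restrict_pi_pi,
    ← ofReal_integral_eq_lintegral_ofReal hint
      (Filter.Eventually.of_forall fun x => prod_nonneg fun i _ => hf₀ i _),
    integral_fintype_prod_eq_prod,
    ENNReal.ofReal_prod_of_nonneg fun i _ => integral_nonneg (hf₀ i)]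
  refine prod_congr rfl fun i _ => ?_
  rw [withDensity_apply _ (hs i), ofReal_integral_eq_lintegral_ofReal (hf i).restrict
    (Filter.Eventually.of_forall (hf₀ i))]

theorem gaussianDensity_zero_one {n : ℕ} (x : Fin n → ℝ) :
    gaussianDensity 0 1 x = ∏ i, gaussianPDFReal 0 1 (x i) := by
  have hconst : (2 * Real.pi) ^ (-(n : ℝ) / 2) = (√(2 * Real.pi))⁻¹ ^ n := by
    rw [Real.sqrt_eq_rpow, ← Real.rpow_neg Real.two_pi_pos.le, ← Real.rpow_natCast,
      ← Real.rpow_mul Real.two_pi_pos.le]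
    ring_nf
  have hexp : -(1 / 2) * (x ⬝ᵥ x) = ∑ i, -x i ^ 2 / 2 := by
    rw [dotProduct, mul_sum]
    exact sum_congr rfl fun i _ => by ring
  simp only [gaussianDensity, gaussianPDFReal, sub_zero, inv_one, one_mulVec, det_one,
    Real.one_rpow, mul_one, NNReal.coe_one, prod_mul_distrib, prod_const, card_univ,
    Fintype.card_fin, ← Real.exp_sum, hconst, hexp]

theorem gaussianMeasure_zero_one (n : ℕ) :
    gaussianMeasure (0 : Fin n → ℝ) 1 = Measure.pi fun _ => gaussianReal 0 1 := by
  simp only [gaussianReal_of_var_ne_zero _ one_ne_zero, gaussianPDF_def]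
  rw [pi_withDensity_ofReal _ (fun _ => gaussianPDFReal_nonneg _ _)
    fun _ => integrable_gaussianPDFReal _ _]
  simp only [gaussianMeasure, gaussianDensity_zero_one]
  rfl

theorem measurable_gaussianDensity {n : ℕ} (μ : Fin n → ℝ) (S : Matrix (Fin n) (Fin n) ℝ) :
    Measurable (gaussianDensity μ S) := by
  unfold gaussianDensity
  fun_prop

theorem transpose_mul_inv_conj_mul {ι : Type*} [Fintype ι] [DecidableEq ι] (S : Matrix ι ι ℝ)
    {L : Matrix ι ι ℝ} (hL : IsUnit L.det) : Lᵀ * (L * S * Lᵀ)⁻¹ * L = S⁻¹ := by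
  rw [Matrix.mul_inv_rev, Matrix.mul_inv_rev,
    mul_nonsing_inv_cancel_left _ _ (by rwa [det_transpose]), nonsing_inv_mul_cancel_right _ _ hL]

theorem gaussianDensity_affine {n : ℕ} (μ b x : Fin n → ℝ) {S L : Matrix (Fin n) (Fin n) ℝ}
    (hS : 0 ≤ S.det) (hL : L.det ≠ 0) :
    gaussianDensity (b + L *ᵥ μ) (L * S * Lᵀ) (b + L *ᵥ x) =
      |L.det|⁻¹ * gaussianDensity μ S x := by
  have hdet : (L * S * Lᵀ).det ^ (-(1 : ℝ) / 2) = |L.det|⁻¹ * S.det ^ (-(1 : ℝ) / 2) := by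
    rw [det_mul, det_mul, det_transpose, mul_right_comm, ← sq, ← sq_abs,
      Real.mul_rpow (sq_nonneg _) hS, ← Real.rpow_natCast, ← Real.rpow_mul (abs_nonneg _)]
    norm_num [Real.rpow_neg_one]
  have hquad : (b + L *ᵥ x - (b + L *ᵥ μ)) ⬝ᵥ
      ((L * S * Lᵀ)⁻¹ *ᵥ (b + L *ᵥ x - (b + L *ᵥ μ))) = (x - μ) ⬝ᵥ (S⁻¹ *ᵥ (x - μ)) := by
    rw [add_sub_add_left_eq_sub, ← mulVec_sub,
      ← transpose_mul_inv_conj_mul S (isUnit_iff_ne_zero.2 hL), ← mulVec_mulVec, ← mulVec_mulVec,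
      dotProduct_mulVec _ Lᵀ, vecMul_transpose]
  rw [gaussianDensity, hdet, hquad, gaussianDensity]
  ring

theorem map_gaussianMeasure_affine {n : ℕ} (μ b : Fin n → ℝ) {S L : Matrix (Fin n) (Fin n) ℝ}
    (hS : 0 ≤ S.det) (hL : L.det ≠ 0) :
    (gaussianMeasure μ S).map (fun x => b + L *ᵥ x) =
      gaussianMeasure (b + L *ᵥ μ) (L * S * Lᵀ) := by
  have hT : Measurable fun x : Fin n → ℝ => b + L *ᵥ x := by fun_prop
  have hvol : volume.map (fun x : Fin n → ℝ => b + L *ᵥ x) =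
      ENNReal.ofReal |L.det⁻¹| • volume := by
    have hcomp : (fun x : Fin n → ℝ => b + L *ᵥ x) = (fun x => b + x) ∘ toLin' L := by
      ext; simp
    rw [hcomp, ← Measure.map_map (measurable_const_add b) (by fun_prop),
      Real.map_matrix_volume_pi_eq_smul_volume_pi hL, Measure.map_smul, map_add_left_eq_self]
  set g := fun y => ENNReal.ofReal (|L.det| * gaussianDensity (b + L *ᵥ μ) (L * S * Lᵀ) y)
  have hg : Measurable g := ((measurable_gaussianDensity _ _).const_mul _).ennreal_ofReal
  have hdensity : (fun x => ENNReal.ofReal (gaussianDensity μ S x)) =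
      g ∘ fun x => b + L *ᵥ x := by
    ext x
    simp only [g, Function.comp_apply, gaussianDensity_affine μ b x hS hL]
    rw [mul_inv_cancel_left₀ (abs_ne_zero.2 hL)]
  rw [gaussianMeasure, hdensity, map_withDensity_comp _ hT hg, hvol, withDensity_smul_measure,
    ← withDensity_smul _ hg, gaussianMeasure]
  congr 1
  ext y
  rw [Pi.smul_apply, smul_eq_mul, ← ENNReal.ofReal_mul (abs_nonneg _), abs_inv,
    inv_mul_cancel_left₀ (abs_ne_zero.2 hL)]

theorem map_gaussianMeasure_eq_multivariateGaussian {n : ℕ} (μ : Fin n → ℝ)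
    {S : Matrix (Fin n) (Fin n) ℝ} (hS : S.PosDef) :
    (gaussianMeasure μ S).map (toLp 2) = multivariateGaussian (toLp 2 μ) S := by
  let L := CFC.sqrt S
  have hLt : Lᵀ = L := (CFC.sqrt_nonneg S).isSelfAdjoint
  have hLL : L * Lᵀ = S := by rw [hLt]; exact CFC.sqrt_mul_sqrt_self S hS.posSemidef.nonneg
  have hL : L.det ≠ 0 := by
    intro h
    exact hS.det_pos.ne' (by rw [← hLL, det_mul, h, zero_mul])
  have hmap : gaussianMeasure μ S = (gaussianMeasure 0 1).map fun x => μ + L *ᵥ x := by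
    rw [map_gaussianMeasure_affine _ _ (by simp) hL, mulVec_zero, add_zero, Matrix.mul_one, hLL]
  rw [hmap, gaussianMeasure_zero_one, multivariateGaussian, ← map_pi_eq_stdGaussian,
    Measure.map_map (by fun_prop) (by fun_prop), Measure.map_map (by fun_prop) (by fun_prop)]
  rfl

theorem isProbabilityMeasure_gaussianMeasure {n : ℕ} (μ : Fin n → ℝ)
    {S : Matrix (Fin n) (Fin n) ℝ} (hS : S.PosDef) :
    IsProbabilityMeasure (gaussianMeasure μ S) := by
  rw [← Measure.isProbabilityMeasure_map_iff (f := toLp 2) (by fun_prop),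
    map_gaussianMeasure_eq_multivariateGaussian μ hS]
  infer_instance

theorem isCenteredWithCov_gaussianMeasure {n : ℕ} {S : Matrix (Fin n) (Fin n) ℝ}
    (hS : S.PosDef) : IsCenteredWithCov (fun x => x) S (gaussianMeasure 0 S) := by
  have hLp : IsCenteredWithCov (fun x : EuclideanSpace ℝ (Fin n) => ofLp x) S
      (multivariateGaussian 0 S) :=
    { memLp i := IsGaussian.memLp_two_id.continuousLinearMap_comp
        (EuclideanSpace.proj (𝕜 := ℝ) i)
      integral_eq_zero i := ((EuclideanSpace.proj (𝕜 := ℝ) i).integral_comp_id_comm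
        IsGaussian.integrable_id).trans (by simp)
      covariance_eq := covariance_eval_multivariateGaussian hS.posSemidef }
  exact hLp.comp_measurePreserving
    ⟨by fun_prop, map_gaussianMeasure_eq_multivariateGaussian 0 hS⟩

end Gaussian

section BayesRisk

open ProbabilityTheory (IndepFun indepFun_prod)

/-- The covariance matrix of the error `A y - x` of the linear estimator `A`, in the model
`y = G x + ε` with independent centered `x` and `ε` of covariances `Γpr` and `Γobs`. -/
def errorCov {ι κ : Type*} [Fintype ι] [Fintype κ] [DecidableEq ι] (G : Matrix κ ι ℝ)
    (Γpr : Matrix ι ι ℝ) (Γobs : Matrix κ κ ℝ) (A : Matrix ι κ ℝ) : Matrix ι ι ℝ :=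
  (A * G - 1) * Γpr * (A * G - 1)ᵀ + A * Γobs * Aᵀ

theorem bayesRisk_jointMeasure {n m : ℕ} (G : Matrix (Fin m) (Fin n) ℝ)
    {Γpr : Matrix (Fin n) (Fin n) ℝ} (hpr : Γpr.PosDef)
    {Γobs : Matrix (Fin m) (Fin m) ℝ} (hobs : Γobs.PosDef)
    (S : Matrix (Fin n) (Fin n) ℝ) (A : Matrix (Fin n) (Fin m) ℝ) :
    bayesRisk (jointMeasure G Γpr Γobs) S A = trace (S * errorCov G Γpr Γobs A) := by
  have := isProbabilityMeasure_gaussianMeasure 0 hpr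
  have := isProbabilityMeasure_gaussianMeasure 0 hobs
  let P := (gaussianMeasure 0 Γpr).prod (gaussianMeasure 0 Γobs)
  have hx : IsCenteredWithCov Prod.fst Γpr P :=
    (isCenteredWithCov_gaussianMeasure hpr).comp_measurePreserving measurePreserving_fst
  have hε : IsCenteredWithCov Prod.snd Γobs P :=
    (isCenteredWithCov_gaussianMeasure hobs).comp_measurePreserving measurePreserving_snd
  have hindep : IndepFun (fun p => (A * G - 1) *ᵥ p.1) (fun p => A *ᵥ p.2) P :=
    indepFun_prod (X := fun x => (A * G - 1) *ᵥ x) (Y := fun e => A *ᵥ e)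
      (by fun_prop) (by fun_prop)
  have herror (p : (Fin n → ℝ) × (Fin m → ℝ)) :
      A *ᵥ (G *ᵥ p.1 + p.2) - p.1 = (A * G - 1) *ᵥ p.1 + A *ᵥ p.2 := by
    rw [mulVec_add, mulVec_mulVec, sub_mulVec, one_mulVec]
    abel
  rw [bayesRisk, jointMeasure, integral_map (by fun_prop)
    (Continuous.aestronglyMeasurable (by fun_prop))]
  simp only [herror]
  exact ((hx.mulVec _).add_of_indepFun (hε.mulVec _) hindep).integral_dotProduct_mulVec S

end BayesRisk

section Whitening

variable {ι : Type*} [Fintype ι] [DecidableEq ι]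

/-- The columns of `W` are generalized eigenvectors of the pencil `(H, P⁻¹)` with eigenvalues `d`,
normalized with respect to `P⁻¹`. In the coordinates `W` both quadratic forms are diagonal. -/
structure IsWhitening (P H W : Matrix ι ι ℝ) (d : ι → ℝ) : Prop where
  transpose_mul_inv_mul : Wᵀ * P⁻¹ * W = 1
  transpose_mul_mul : Wᵀ * H * W = diagonal d

theorem isWhitening_of_eigenpairs {P H : Matrix ι ι ℝ} {d : ι → ℝ} {w : ι → ι → ℝ}
    (heig : ∀ i, H *ᵥ w i = d i • (P⁻¹ *ᵥ w i))
    (hnorm : ∀ i j, w i ⬝ᵥ (P⁻¹ *ᵥ w j) = if i = j then (1 : ℝ) else 0) :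
    IsWhitening P H (of w)ᵀ d := by
  have hentry (M : Matrix ι ι ℝ) (i j : ι) :
      ((of w)ᵀᵀ * M * (of w)ᵀ) i j = w i ⬝ᵥ (M *ᵥ w j) := by
    rw [transpose_transpose, Matrix.mul_assoc]
    rfl
  constructor <;> ext i j
  · rw [hentry, hnorm, one_apply]
  · rw [hentry, heig, dotProduct_smul, hnorm, diagonal_apply]
    split_ifs with hij <;> simp [hij]

theorem sum_smul_vecMulVec {R κ : Type*} [CommSemiring R] (s : ι → R) (w : ι → κ → R) :
    ∑ i, s i • vecMulVec (w i) (w i) = (of w)ᵀ * diagonal s * of w := by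
  ext k l
  rw [Matrix.sum_apply, mul_apply]
  simp only [Matrix.smul_apply, vecMulVec_apply, mul_diagonal, transpose_apply, of_apply,
    smul_eq_mul]
  exact sum_congr rfl fun i _ => by ring

theorem diagonal_mul_sub_one_mul_transpose_add {d : ι → ℝ} (hd : ∀ i, 1 + d i ≠ 0)
    (Y : Matrix ι ι ℝ) :
    (Y * diagonal d - 1) * (Y * diagonal d - 1)ᵀ + Y * diagonal d * Yᵀ =
      diagonal (1 + d)⁻¹ +
        (Y - diagonal (1 + d)⁻¹) * diagonal (d * (1 + d)) * (Y - diagonal (1 + d)⁻¹)ᵀ := by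
  have hlinear : diagonal (1 + d)⁻¹ * diagonal (d * (1 + d)) = diagonal d := by
    rw [diagonal_mul_diagonal]
    congr 1
    ext i
    simp only [Pi.inv_apply, Pi.add_apply, Pi.one_apply, Pi.mul_apply]
    field_simp [hd i]
  have hconst : diagonal d * diagonal (1 + d)⁻¹ = 1 - diagonal (1 + d)⁻¹ := by
    rw [diagonal_mul_diagonal, ← diagonal_one, diagonal_sub]
    congr 1
    ext i
    simp only [Pi.inv_apply, Pi.add_apply, Pi.one_apply]
    field_simp [hd i]
    ring
  have hquadratic : diagonal (d * (1 + d)) = diagonal d + diagonal d * diagonal d := by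
    rw [diagonal_mul_diagonal, diagonal_add]
    congr 1
    ext i
    simp only [Pi.mul_apply, Pi.add_apply, Pi.one_apply]
    ring
  have hlinear_comm : diagonal (d * (1 + d)) * diagonal (1 + d)⁻¹ = diagonal d := by
    rw [← hlinear, diagonal_mul_diagonal, diagonal_mul_diagonal]
    simp only [mul_comm]
  simp only [transpose_sub, transpose_mul, diagonal_transpose, transpose_one, Matrix.sub_mul,
    Matrix.mul_sub, Matrix.one_mul, Matrix.mul_one, hlinear, hconst, Matrix.mul_assoc, hlinear_comm]
  simp only [hquadratic, Matrix.mul_add, Matrix.add_mul, Matrix.mul_assoc]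
  abel

namespace IsWhitening

variable {κ : Type*} [Fintype κ] [DecidableEq κ] {P H W : Matrix ι ι ℝ} {d : ι → ℝ}

theorem isUnit_det (h : IsWhitening P H W d) : IsUnit W.det :=
  isUnit_det_of_left_inverse h.transpose_mul_inv_mul

theorem mul_transpose (h : IsWhitening P H W d) : W * Wᵀ = P := by
  have hinv : W * Wᵀ * P⁻¹ = 1 := by
    rw [Matrix.mul_assoc, mul_eq_one_comm]
    exact h.transpose_mul_inv_mul
  have hP : IsUnit P.det := isUnit_nonsing_inv_det_iff.1 (isUnit_det_of_left_inverse hinv)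
  rw [← nonsing_inv_mul_cancel_right P (W * Wᵀ) hP, hinv, Matrix.one_mul]

theorem transpose_mul_add_inv_mul (h : IsWhitening P H W d) :
    Wᵀ * (H + P⁻¹) * W = diagonal (1 + d) := by
  rw [Matrix.mul_add, Matrix.add_mul, h.transpose_mul_inv_mul, h.transpose_mul_mul, add_comm,
    ← diagonal_one, diagonal_add]
  rfl

theorem add_inv_inv_inv (h : IsWhitening P H W d) (hd : ∀ i, 1 + d i ≠ 0) :
    (H + P⁻¹)⁻¹⁻¹ = H + P⁻¹ := by
  refine nonsing_inv_nonsing_inv _ (isUnit_iff_ne_zero.2 fun hdet => ?_)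
  have hprod := congrArg det h.transpose_mul_add_inv_mul
  rw [det_mul, det_mul, hdet, mul_zero, zero_mul, det_diagonal] at hprod
  exact prod_ne_zero_iff.2 (fun i _ => hd i) hprod.symm

theorem exists_eq_mul_mul_transpose (h : IsWhitening P H W d) (B : Matrix ι ι ℝ) :
    ∃ C : Matrix ι ι ℝ, C.rank ≤ B.rank ∧ B = W * C * Wᵀ := by
  refine ⟨W⁻¹ * B * Wᵀ⁻¹, (rank_mul_le_left _ _).trans (rank_mul_le_right _ _), ?_⟩
  have hWt : IsUnit Wᵀ.det := by rw [det_transpose]; exact h.isUnit_det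
  rw [Matrix.mul_assoc, nonsing_inv_mul_cancel_right _ _ hWt,
    mul_nonsing_inv_cancel_left _ _ h.isUnit_det]

theorem errorCov_eq {G : Matrix κ ι ℝ} {Γobs : Matrix κ κ ℝ} (hobs : Γobs.PosDef)
    (h : IsWhitening P (Gᵀ * Γobs⁻¹ * G) W d) (Y : Matrix ι ι ℝ) :
    errorCov G P Γobs (W * Y * Wᵀ * Gᵀ * Γobs⁻¹) =
      W * ((Y * diagonal d - 1) * (Y * diagonal d - 1)ᵀ + Y * diagonal d * Yᵀ) * Wᵀ := by
  set A := W * Y * Wᵀ * Gᵀ * Γobs⁻¹ with hA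
  have hdata : (A * G - 1) * W = W * (Y * diagonal d - 1) := by
    rw [hA, ← h.transpose_mul_mul]
    simp only [Matrix.sub_mul, Matrix.mul_sub, Matrix.one_mul, Matrix.mul_one, Matrix.mul_assoc]
  have hnoise : A * Γobs * Aᵀ = W * (Y * diagonal d * Yᵀ) * Wᵀ := by
    have hsymm : Γobs⁻¹ᵀ = Γobs⁻¹ := hobs.inv.isHermitian
    rw [hA, nonsing_inv_mul_cancel_right _ _ (isUnit_iff_ne_zero.2 hobs.det_pos.ne'),
      ← h.transpose_mul_mul]
    simp only [transpose_mul, transpose_transpose, hsymm, Matrix.mul_assoc]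
  calc errorCov G P Γobs A = (A * G - 1) * W * ((A * G - 1) * W)ᵀ + A * Γobs * Aᵀ := by
        rw [errorCov, ← h.mul_transpose]
        simp only [transpose_mul, Matrix.mul_assoc]
    _ = _ := by
        rw [hdata, hnoise]
        simp only [transpose_mul, Matrix.mul_add, Matrix.add_mul, Matrix.mul_assoc]

theorem trace_mul_errorCov {G : Matrix κ ι ℝ} {Γobs : Matrix κ κ ℝ} (hobs : Γobs.PosDef)
    (h : IsWhitening P (Gᵀ * Γobs⁻¹ * G) W d) (hd : ∀ i, 1 + d i ≠ 0) (C : Matrix ι ι ℝ) :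
    trace ((Gᵀ * Γobs⁻¹ * G + P⁻¹) *
        errorCov G P Γobs ((P - W * C * Wᵀ) * Gᵀ * Γobs⁻¹)) =
      Fintype.card ι + weightedSqNorm (1 + d) (d * (1 + d)) (diagonal (d / (1 + d)) - C) := by
  have hconj : P - W * C * Wᵀ = W * (1 - C) * Wᵀ := by
    rw [Matrix.mul_sub, Matrix.sub_mul, Matrix.mul_one, h.mul_transpose]
  have hshift : 1 - C - diagonal (1 + d)⁻¹ = diagonal (d / (1 + d)) - C := by
    rw [sub_right_comm, ← diagonal_one, diagonal_sub]
    congr 2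
    ext i
    simp only [Pi.inv_apply, Pi.div_apply, Pi.add_apply, Pi.one_apply]
    field_simp [hd i]
    ring
  have hposterior : trace (diagonal (1 + d) * diagonal (1 + d)⁻¹) = (Fintype.card ι : ℝ) := by
    simp [hd]
  rw [hconj, h.errorCov_eq hobs, diagonal_mul_sub_one_mul_transpose_add hd, hshift]
  set F := diagonal (d / (1 + d)) - C
  set S := Gᵀ * Γobs⁻¹ * G + P⁻¹
  set M := diagonal (1 + d)⁻¹ + F * diagonal (d * (1 + d)) * Fᵀ
  calc trace (S * (W * M * Wᵀ)) = trace (Wᵀ * S * W * M) := by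
        rw [← Matrix.mul_assoc, trace_mul_comm]
        simp only [Matrix.mul_assoc]
    _ = Fintype.card ι + weightedSqNorm (1 + d) (d * (1 + d)) F := by
        rw [h.transpose_mul_add_inv_mul, Matrix.mul_add, trace_add, hposterior,
          trace_diagonal_mul_mul_diagonal_mul_transpose]

end IsWhitening

theorem IsWhitening.bayesRisk_truncate_le {n m r : ℕ} {G : Matrix (Fin m) (Fin n) ℝ}
    {Γobs : Matrix (Fin m) (Fin m) ℝ} (hobs : Γobs.PosDef) {P W : Matrix (Fin n) (Fin n) ℝ}
    (hP : P.PosDef) {d : Fin n → ℝ} (h : IsWhitening P (Gᵀ * Γobs⁻¹ * G) W d) (hd : Antitone d)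
    (hd₀ : ∀ i, 0 ≤ d i) {B : Matrix (Fin n) (Fin n) ℝ} (hB : B.rank ≤ r) :
    bayesRisk (jointMeasure G P Γobs) (Gᵀ * Γobs⁻¹ * G + P⁻¹)
        ((P - W * diagonal (truncate r (d / (1 + d))) * Wᵀ) * Gᵀ * Γobs⁻¹) ≤
      bayesRisk (jointMeasure G P Γobs) (Gᵀ * Γobs⁻¹ * G + P⁻¹) ((P - B) * Gᵀ * Γobs⁻¹) := by
  obtain ⟨C, hCB, rfl⟩ := h.exists_eq_mul_mul_transpose B
  have hpos (i : Fin n) : 0 < 1 + d i := add_pos_of_pos_of_nonneg one_pos (hd₀ i)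
  have hcube : (fun i => (1 + d) i * (d * (1 + d)) i * (d / (1 + d)) i ^ 2) = d ^ 3 := by
    ext i
    simp only [Pi.mul_apply, Pi.div_apply, Pi.add_apply, Pi.one_apply, Pi.pow_apply]
    field_simp [(hpos i).ne']
  have hanti : Antitone (d ^ 3) := fun i j hij => pow_le_pow_left₀ (hd₀ j) (hd hij) 3
  rw [bayesRisk_jointMeasure G hP hobs, bayesRisk_jointMeasure G hP hobs,
    h.trace_mul_errorCov hobs fun i => (hpos i).ne',
    h.trace_mul_errorCov hobs fun i => (hpos i).ne']
  refine add_le_add_right (weightedSqNorm_diagonal_sub_truncate_le (fun i => (hpos i).le)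
    (fun i => mul_nonneg (hd₀ i) (hpos i).le) (hcube ▸ hanti) (hCB.trans hB)) _

end Whitening

/-- Theorem 4.2 (i): `Â* = Γ̂pos Gᵀ Γobs⁻¹` belongs to the class `𝓐̂_r` and minimizes the
Bayes risk `E‖A y − x‖²_{Γpos⁻¹}` over `𝓐̂_r = {(Γpr − B) Gᵀ Γobs⁻¹ : rank B ≤ r}`. -/
theorem optimal_low_rank_update_posterior_mean
    (n m r : ℕ) (hn : 0 < n) (hm : 0 < m) (hr : r ≤ n)
    (G : Matrix (Fin m) (Fin n) ℝ)
    (Γobs : Matrix (Fin m) (Fin m) ℝ) (hobs : Γobs.PosDef)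
    (Γpr : Matrix (Fin n) (Fin n) ℝ) (hpr : Γpr.PosDef)
    (H Γpos : Matrix (Fin n) (Fin n) ℝ)
    (hH : H = Gᵀ * Γobs⁻¹ * G)
    (hΓpos : Γpos = (H + Γpr⁻¹)⁻¹)
    (δ : Fin n → ℝ) (w : Fin n → Fin n → ℝ)
    (hδ : ∀ i, 0 ≤ δ i)
    (hord : ∀ i j : Fin n, i ≤ j → (δ j) ^ 2 ≤ (δ i) ^ 2)
    (heig : ∀ i, H *ᵥ w i = (δ i) ^ 2 • (Γpr⁻¹ *ᵥ w i))
    (hnorm : ∀ i j, w i ⬝ᵥ (Γpr⁻¹ *ᵥ w j) = if i = j then (1:ℝ) else 0)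
    (Γhat : Matrix (Fin n) (Fin n) ℝ)
    (hΓhat : Γhat = Γpr - ∑ i ∈ Finset.univ.filter (fun i : Fin n => (i : ℕ) < r),
      ((δ i) ^ 2 / (1 + (δ i) ^ 2)) • vecMulVec (w i) (w i))
    (Ahat : Matrix (Fin n) (Fin m) ℝ)
    (hAhat : Ahat = Γhat * Gᵀ * Γobs⁻¹) :
    (∃ B : Matrix (Fin n) (Fin n) ℝ, B.rank ≤ r ∧ Ahat = (Γpr - B) * Gᵀ * Γobs⁻¹) ∧
      ∀ B : Matrix (Fin n) (Fin n) ℝ, B.rank ≤ r →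
        bayesRisk (jointMeasure G Γpr Γobs) Γpos⁻¹ Ahat ≤
          bayesRisk (jointMeasure G Γpr Γobs) Γpos⁻¹ ((Γpr - B) * Gᵀ * Γobs⁻¹) := by
  set s : Fin n → ℝ := δ ^ 2 / (1 + δ ^ 2)
  let W : Matrix (Fin n) (Fin n) ℝ := (of w)ᵀ
  have hW : IsWhitening Γpr (Gᵀ * Γobs⁻¹ * G) W (δ ^ 2) :=
    isWhitening_of_eigenpairs (hH ▸ heig) hnorm
  have hδsq (i : Fin n) : 0 ≤ (δ ^ 2) i := sq_nonneg (δ i)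
  have hprec : Γpos⁻¹ = Gᵀ * Γobs⁻¹ * G + Γpr⁻¹ := by
    rw [hΓpos, hH, hW.add_inv_inv_inv fun i => (add_pos_of_pos_of_nonneg one_pos (hδsq i)).ne']
  have hupdate : Ahat = (Γpr - W * diagonal (truncate r s) * Wᵀ) * Gᵀ * Γobs⁻¹ := by
    rw [hAhat, hΓhat, transpose_transpose, ← sum_smul_vecMulVec, sum_truncate_smul]
    rfl
  have hrank : (W * diagonal (truncate r s) * Wᵀ).rank ≤ r :=
    (rank_mul_le_left _ _).trans ((rank_mul_le_right _ _).trans (rank_diagonal_truncate_le r s))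
  refine ⟨⟨_, hrank, hupdate⟩, fun B hB => ?_⟩
  rw [hprec, hupdate]
  exact hW.bayesRisk_truncate_le hobs hpr hord hδsq hB
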